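/- Let n ≥ 1, δ ∈ (0,1], θ ∈ (0,δ]. Let F₁, F₂, F₃ : [0,∞) → [0,∞) be bounded with F₁ non-decreasing and F₂, F₃ non-increasing. Let J, K ⊂ ℝ^n be cubes with K ⊂ J, and let ℓ > 0 satisfy d(K, ℝ^n∖J) ≥ ℓ ≥ ℓ(K). Then ∫_{ℝ^n∖J} ∫_{ℝ^n∖(3K)} ∫_K F₁(|x−c_K|) F₂(|x−y|+|x−z|) F₃(1 + (|x+y|+|x+z|)/(1+|x−y|+|x−z|)) · ℓ(K)^δ / (|x−y|+|x−z|)^{2n+δ} dx dy dz ≤ C F₁(ℓ(K)) F₂(ℓ(K)) F̃₃(J) |K| (ℓ(K)/ℓ)^δ, where the integral is with respect to Lebesgue measure in x ∈ K, y ∈ ℝ^n∖(3K), z ∈ ℝ^n∖J, and C depends only on n, δ and θ. -/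

import Mathlib

open MeasureTheory Set
open scoped ENNReal NNReal

noncomputable section

abbrev Rn (n : ℕ) := Fin n → ℝ

/-- A (half-open, axis-parallel) cube in `ℝⁿ` (with the `ℓ^∞` metric),
given by its lower-left corner and its (positive) sidelength. -/
structure Cube (n : ℕ) where
  corner : Fin n → ℝ
  len : ℝ
  len_pos : 0 < len

namespace Cube

/-- The underlying set `∏_i [aᵢ, aᵢ + ℓ)` of a cube. -/
def toSet {n : ℕ} (I : Cube n) : Set (Rn n) :=
  {x | ∀ i, I.corner i ≤ x i ∧ x i < I.corner i + I.len}

/-- The center of a cube. -/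
def center {n : ℕ} (I : Cube n) : Rn n := fun i => I.corner i + I.len / 2

/-- `λI`: the cube with the same center and sidelength `λ ℓ(I)`. -/
def dilate {n : ℕ} (I : Cube n) (lam : ℝ) (hlam : 0 < lam) : Cube n :=
  ⟨fun i => I.center i - lam * I.len / 2, lam * I.len, mul_pos hlam I.len_pos⟩

end Cube

/-- The unit cube `𝕀 = [-1/2, 1/2)^n`. -/
def unitCube (n : ℕ) : Cube n := ⟨fun _ => -(1 / 2 : ℝ), 1, one_pos⟩

/-- The distance `d(E, F) = inf {|x - y| : x ∈ E, y ∈ F}` between two sets. -/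
def sDist {α : Type*} [PseudoMetricSpace α] (E F : Set α) : ℝ :=
  sInf ((fun q : α × α => dist q.1 q.2) '' (E ×ˢ F))

/-- The relative distance `rd(I, J) = d(I, J) / max{ℓ(I), ℓ(J)}` between two cubes. -/
def relDist {n : ℕ} (I J : Cube n) : ℝ :=
  sDist I.toSet J.toSet / max I.len J.len

/-- `F̃₂(t) = Σ_{k=0}^∞ 2^{-kθ} F₂(2^{-k} t)`. -/
def Ft2 (θ : ℝ) (F₂ : ℝ → ℝ) (t : ℝ) : ℝ :=
  ∑' k : ℕ, (2 : ℝ) ^ (-(k : ℝ) * θ) * F₂ ((2 : ℝ) ^ (-(k : ℝ)) * t)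

/-- `F̃₃(Q) = Σ_{k=0}^∞ 2^{-kθ} F₃(rd(2^k Q, 𝕀))`. -/
def Ft3 {n : ℕ} (θ : ℝ) (F₃ : ℝ → ℝ) (Q : Cube n) : ℝ :=
  ∑' k : ℕ, (2 : ℝ) ^ (-(k : ℝ) * θ) *
    F₃ (relDist (Q.dilate ((2 : ℝ) ^ k) (by positivity)) (unitCube n))

/-!
Sort the triples `(x, y, z)` by the size of `r = |x - y| + |x - z| ≥ ℓ`, choosing `k` with
`r ≤ 2^k ℓ ≤ 2r`. Since `ℓ ≤ ℓ(J)`, the points `y` and `z` are within `ℓ(2^k J)` of `x ∈ 2^k J`, so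
the argument of `F₃` is at least `rd(2^k J, 𝕀)`. Moreover `2^k ℓ` and the distances from `c_K` to
`y` and `z` are all `O(r)`, so `r^{-(2n+δ)}` is dominated by a product of the two kernels
`(2^k ℓ + |c_K - ·|)^{-(n+δ/2)}`. Their integrals over `ℝⁿ` multiply to `O((2^k ℓ)^{-δ})`, and
`2^{-kδ} ≤ 2^{-kθ}` makes the sum over `k` a multiple of `F̃₃(J)`.
-/

section SetDistance

variable {α : Type*} [PseudoMetricSpace α] {E F : Set α} {x y : α}

theorem sDist_le_dist (hx : x ∈ E) (hy : y ∈ F) : sDist E F ≤ dist x y :=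
  csInf_le ⟨0, by rintro _ ⟨q, -, rfl⟩; exact dist_nonneg⟩ ⟨(x, y), ⟨hx, hy⟩, rfl⟩

theorem sDist_nonneg (E F : Set α) : 0 ≤ sDist E F :=
  Real.sInf_nonneg (by rintro _ ⟨q, -, rfl⟩; exact dist_nonneg)

end SetDistance

namespace Cube

variable {n : ℕ} {E : Set (Rn n)} {x : Rn n}

theorem toSet_eq_pi (I : Cube n) :
    I.toSet = Set.univ.pi fun i => Ico (I.corner i) (I.corner i + I.len) := by
  ext x
  simp [toSet]

theorem measurableSet_toSet (I : Cube n) : MeasurableSet I.toSet := by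
  rw [toSet_eq_pi]
  exact .univ_pi fun _ => measurableSet_Ico

theorem volume_toSet_ne_top (I : Cube n) : volume I.toSet ≠ ⊤ := by
  rw [toSet_eq_pi, Real.volume_pi_Ico]
  exact ENNReal.prod_ne_top fun _ _ => ENNReal.ofReal_ne_top

theorem corner_mem_toSet (I : Cube n) : I.corner ∈ I.toSet :=
  fun _ => ⟨le_rfl, lt_add_of_pos_right _ I.len_pos⟩

theorem dist_center_le (I : Cube n) (hx : x ∈ I.toSet) : dist x I.center ≤ I.len / 2 := by
  refine (dist_pi_le_iff (half_pos I.len_pos).le).2 fun i => ?_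
  obtain ⟨hl, hu⟩ := hx i
  rw [Real.dist_eq, abs_le, center]
  constructor <;> linarith

theorem toSet_subset_toSet_dilate (I : Cube n) {lam : ℝ} (hlam : 0 < lam) (h : 1 ≤ lam) :
    I.toSet ⊆ (I.dilate lam hlam).toSet := by
  intro x hx i
  obtain ⟨hl, hu⟩ := hx i
  have hlen : I.len ≤ lam * I.len := le_mul_of_one_le_left I.len_pos.le h
  simp only [dilate, center]
  constructor <;> linarith

theorem sDist_compl_toSet_le_len [NeZero n] (I : Cube n) (hE : E.Nonempty) (hEI : E ⊆ I.toSet) :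
    sDist E I.toSetᶜ ≤ I.len := by
  obtain ⟨x, hx⟩ := hE
  have hshift : (fun i => x i + I.len) ∈ I.toSetᶜ := fun h => by
    linarith [(h 0).2, (hEI hx 0).1]
  refine (sDist_le_dist hx hshift).trans ((dist_pi_le_iff I.len_pos.le).2 fun i => ?_)
  simp [abs_of_pos I.len_pos]

end Cube

section RelativeDistance

theorem zero_mem_toSet_unitCube (n : ℕ) : (0 : Rn n) ∈ (unitCube n).toSet := fun i => by
  norm_num [unitCube]

theorem two_mul_norm_le_norm_add_add_dist {E : Type*} [SeminormedAddCommGroup E] [NormedSpace ℝ E]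
    (x y : E) : 2 * ‖x‖ ≤ ‖x + y‖ + dist x y :=
  calc 2 * ‖x‖ = ‖(x + y) + (x - y)‖ := by
        rw [add_add_sub_cancel, ← two_smul ℝ x, norm_smul, Real.norm_two]
    _ ≤ ‖x + y‖ + dist x y := dist_eq_norm x y ▸ norm_add_le _ _

variable {n : ℕ}

theorem relDist_nonneg (I J : Cube n) : 0 ≤ relDist I J :=
  div_nonneg (sDist_nonneg _ _) (I.len_pos.le.trans (le_max_left _ _))

theorem relDist_unitCube_le {I : Cube n} {x y z : Rn n} (hx : x ∈ I.toSet)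
    (hr : dist x y + dist x z ≤ I.len) :
    relDist I (unitCube n) ≤ 1 + (‖x + y‖ + ‖x + z‖) / (1 + dist x y + dist x z) := by
  have hden : 0 < 1 + dist x y + dist x z := by positivity
  have hmax : 1 + dist x y + dist x z ≤ 2 * max I.len 1 := by
    linarith [le_max_left I.len 1, le_max_right I.len 1]
  have hnorm : sDist I.toSet (unitCube n).toSet ≤ ‖x‖ := by
    simpa using sDist_le_dist hx (zero_mem_toSet_unitCube n)
  calc relDist I (unitCube n) ≤ ‖x‖ / max I.len 1 := by
        unfold relDist
        gcongr
        exact le_rfl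
    _ = 2 * ‖x‖ / (2 * max I.len 1) := (mul_div_mul_left _ _ two_ne_zero).symm
    _ ≤ 2 * ‖x‖ / (1 + dist x y + dist x z) := by gcongr
    _ ≤ ((1 + dist x y + dist x z) + (‖x + y‖ + ‖x + z‖)) / (1 + dist x y + dist x z) := by
        gcongr
        linarith [two_mul_norm_le_norm_add_add_dist x y, two_mul_norm_le_norm_add_add_dist x z,
          norm_nonneg x]
    _ = 1 + (‖x + y‖ + ‖x + z‖) / (1 + dist x y + dist x z) := by
        rw [add_div, div_self hden.ne']

end RelativeDistance

section DecayKernel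

/-- The kernel `y ↦ (R + |c - y|)^{-p}` centred at `c` and flat at scale `R`. It takes values in
`ℝ≥0∞` because it is only ever integrated with `∫⁻`. -/
def decayKernel {α : Type*} [PseudoMetricSpace α] (p R : ℝ) (c y : α) : ℝ≥0∞ :=
  ENNReal.ofReal ((R + dist c y) ^ (-p))

@[fun_prop]
theorem measurable_decayKernel {α : Type*} [PseudoMetricSpace α] [MeasurableSpace α]
    [OpensMeasurableSpace α] (p R : ℝ) (c : α) : Measurable (decayKernel p R c) := by
  unfold decayKernel
  fun_prop

variable {E : Type*} [NormedAddCommGroup E] [NormedSpace ℝ E]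

theorem decayKernel_eq_mul_decayKernel_one (p : ℝ) {R : ℝ} (hR : 0 < R) (c y : E) :
    decayKernel p R c y = ENNReal.ofReal (R ^ (-p)) * decayKernel p 1 0 (R⁻¹ • (y - c)) := by
  have hfactor : R + dist c y = R * (1 + dist 0 (R⁻¹ • (y - c))) := by
    rw [dist_zero_left, norm_smul, norm_inv, Real.norm_of_nonneg hR.le, dist_comm, dist_eq_norm]
    field_simp
  rw [decayKernel, decayKernel, hfactor, Real.mul_rpow hR.le (by positivity),
    ENNReal.ofReal_mul (by positivity)]

variable [FiniteDimensional ℝ E] [MeasurableSpace E] [BorelSpace E]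
  (μ : Measure E) [μ.IsAddHaarMeasure]

theorem lintegral_decayKernel (p : ℝ) {R : ℝ} (hR : 0 < R) (c : E) :
    ∫⁻ y, decayKernel p R c y ∂μ =
      ENNReal.ofReal (R ^ (Module.finrank ℝ E - p)) * ∫⁻ u, decayKernel p 1 0 u ∂μ := by
  have hscale : ∫⁻ y, decayKernel p 1 0 (R⁻¹ • y) ∂μ =
      ENNReal.ofReal (R ^ (Module.finrank ℝ E : ℝ)) * ∫⁻ u, decayKernel p 1 0 u ∂μ := by
    rw [← lintegral_map (measurable_decayKernel p 1 (0 : E)) (measurable_const_smul R⁻¹),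
      Measure.map_addHaar_smul μ (inv_ne_zero hR.ne'), lintegral_smul_measure]
    simp [abs_of_pos hR]
  simp_rw [decayKernel_eq_mul_decayKernel_one p hR c]
  rw [lintegral_const_mul _ (by fun_prop),
    lintegral_sub_right_eq_self (fun y => decayKernel p 1 0 (R⁻¹ • y)) c, hscale, ← mul_assoc,
    ← ENNReal.ofReal_mul (by positivity), ← Real.rpow_add hR, neg_add_eq_sub]

theorem exists_lintegral_decayKernel_le {p : ℝ} (hp : Module.finrank ℝ E < p) :
    ∃ C : ℝ, 0 < C ∧ ∀ R : ℝ, 0 < R → ∀ c : E,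
      ∫⁻ y, decayKernel p R c y ∂μ ≤ ENNReal.ofReal (C * R ^ (Module.finrank ℝ E - p)) := by
  have hfin : ∫⁻ u : E, decayKernel p 1 0 u ∂μ ≠ ⊤ := by
    simpa [decayKernel] using (finite_integral_one_add_norm (μ := μ) hp).ne
  refine ⟨(∫⁻ u : E, decayKernel p 1 0 u ∂μ).toReal + 1, by positivity, fun R hR c => ?_⟩
  rw [lintegral_decayKernel μ p hR, mul_comm, ENNReal.ofReal_mul (by positivity)]
  gcongr
  rw [ENNReal.le_ofReal_iff_toReal_le hfin (by positivity)]
  exact le_add_of_nonneg_right zero_le_one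

end DecayKernel

theorem lintegral_lintegral_tsum_mul {ι α β : Type*} [Countable ι] [MeasurableSpace α]
    [MeasurableSpace β] {μ : Measure α} {ν : Measure β} (a : ι → ℝ≥0∞) {g : ι → α → ℝ≥0∞}
    {h : ι → β → ℝ≥0∞} (hg : ∀ k, Measurable (g k)) (hh : ∀ k, Measurable (h k)) :
    ∫⁻ z, ∫⁻ y, ∑' k, a k * (g k y * h k z) ∂μ ∂ν =
      ∑' k, a k * ((∫⁻ y, g k y ∂μ) * ∫⁻ z, h k z ∂ν) := by
  have hinner (z : β) : ∫⁻ y, ∑' k, a k * (g k y * h k z) ∂μ =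
      ∑' k, a k * ((∫⁻ y, g k y ∂μ) * h k z) := by
    rw [lintegral_tsum fun k => (((hg k).mul_const _).const_mul _).aemeasurable]
    refine tsum_congr fun k => ?_
    rw [lintegral_const_mul _ ((hg k).mul_const _), lintegral_mul_const _ (hg k)]
  simp_rw [hinner]
  rw [lintegral_tsum fun k => (((hh k).const_mul _).const_mul _).aemeasurable]
  refine tsum_congr fun k => ?_
  rw [lintegral_const_mul _ ((hh k).const_mul _), lintegral_const_mul _ (hh k)]

section DyadicScales

theorem exists_two_pow_mul_near {l r : ℝ} (hl : 0 < l) (hlr : l ≤ r) :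
    ∃ k : ℕ, r ≤ 2 ^ k * l ∧ 2 ^ k * l ≤ 2 * r := by
  obtain ⟨m, hle, hlt⟩ := exists_nat_pow_near ((one_le_div hl).2 hlr) one_lt_two
  rw [le_div_iff₀ hl] at hle
  rw [div_lt_iff₀ hl] at hlt
  exact ⟨m + 1, hlt.le, by rw [pow_succ']; linarith⟩

theorem two_pow_mul_rpow_neg_le {l δ θ : ℝ} (hl : 0 < l) (hθδ : θ ≤ δ) (k : ℕ) :
    (2 ^ k * l) ^ (-δ) ≤ (2 : ℝ) ^ (-(k : ℝ) * θ) * l ^ (-δ) := by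
  rw [Real.mul_rpow (by positivity) hl.le, ← Real.rpow_natCast_mul zero_le_two, mul_neg,
    ← neg_mul]
  have hexp : -(k : ℝ) * δ ≤ -k * θ := mul_le_mul_of_nonpos_left hθδ (by simp)
  gcongr
  exact one_le_two

theorem rpow_neg_two_mul_le_mul {a b s p : ℝ} (ha : 0 < a) (hb : 0 < b) (has : a ≤ s)
    (hbs : b ≤ s) (hp : 0 ≤ p) : s ^ (-(2 * p)) ≤ a ^ (-p) * b ^ (-p) :=
  calc s ^ (-(2 * p)) = s ^ (-p) * s ^ (-p) := by
        rw [← Real.rpow_add (ha.trans_le has)]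
        ring_nf
    _ ≤ a ^ (-p) * b ^ (-p) :=
        mul_le_mul (Real.rpow_le_rpow_of_nonpos ha has (neg_nonpos.2 hp))
          (Real.rpow_le_rpow_of_nonpos hb hbs (neg_nonpos.2 hp))
          (Real.rpow_nonneg (ha.le.trans has) _) (Real.rpow_nonneg ha.le _)

end DyadicScales

section DyadicMajorant

variable {n : ℕ} {F₃ : ℝ → ℝ} {J : Cube n}

/-- The values `F₃(rd(2^k J, 𝕀))` whose `2^{-kθ}`-weighted sum is `F̃₃(J)`. -/
def dyadicProfile (F₃ : ℝ → ℝ) (J : Cube n) (k : ℕ) : ℝ :=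
  F₃ (relDist (J.dilate (2 ^ k) (by positivity)) (unitCube n))

theorem dyadicProfile_nonneg (hF₃ : ∀ t, 0 ≤ F₃ t) (k : ℕ) : 0 ≤ dyadicProfile F₃ J k :=
  hF₃ _

theorem summable_dyadicProfile {θ : ℝ} (hθ : 0 < θ) (hF₃ : ∀ t, 0 ≤ F₃ t)
    (hanti : AntitoneOn F₃ (Ici 0)) :
    Summable fun k : ℕ => (2 : ℝ) ^ (-(k : ℝ) * θ) * dyadicProfile F₃ J k := by
  have hgeom : Summable fun k : ℕ => (2 : ℝ) ^ (-(k : ℝ) * θ) := by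
    simp_rw [neg_mul_comm, mul_comm _ (-θ), Real.rpow_mul_natCast zero_le_two]
    exact summable_geometric_of_lt_one (by positivity)
      (Real.rpow_lt_one_of_one_lt_of_neg one_lt_two (neg_lt_zero.2 hθ))
  refine .of_nonneg_of_le (fun k => mul_nonneg (by positivity) (dyadicProfile_nonneg hF₃ k))
    (fun k => ?_) (hgeom.mul_right (F₃ 0))
  gcongr
  exact hanti self_mem_Ici (relDist_nonneg _ _) (relDist_nonneg _ _)

theorem le_dyadicProfile (hanti : AntitoneOn F₃ (Ici 0)) {x y z : Rn n} (hx : x ∈ J.toSet) {k : ℕ}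
    (hr : dist x y + dist x z ≤ 2 ^ k * J.len) :
    F₃ (1 + (‖x + y‖ + ‖x + z‖) / (1 + dist x y + dist x z)) ≤ dyadicProfile F₃ J k :=
  hanti (relDist_nonneg _ _) (mem_Ici.2 (by positivity))
    (relDist_unitCube_le (J.toSet_subset_toSet_dilate _ (one_le_pow₀ one_le_two) hx) hr)

/-- The function `∑ₖ F₃(rd(2^k J, 𝕀)) (2^k ℓ + |c - y|)^{-p} (2^k ℓ + |c - z|)^{-p}`, which
dominates `F₃(⋯) / (|x - y| + |x - z|)^{2p}` up to a constant and no longer involves `x`. -/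
def dyadicMajorant (p : ℝ) (F₃ : ℝ → ℝ) (J : Cube n) (l : ℝ) (c y z : Rn n) : ℝ≥0∞ :=
  ∑' k : ℕ, ENNReal.ofReal (dyadicProfile F₃ J k) *
    (decayKernel p (2 ^ k * l) c y * decayKernel p (2 ^ k * l) c z)

theorem ofReal_div_rpow_le_dyadicMajorant {p l : ℝ} {c x y z : Rn n} (hp : 0 ≤ p) (hl : 0 < l)
    (hF₃ : ∀ t, 0 ≤ F₃ t) (hanti : AntitoneOn F₃ (Ici 0)) (hlJ : l ≤ J.len) (hx : x ∈ J.toSet)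
    (hxc : dist x c ≤ l) (hlr : l ≤ dist x y + dist x z) :
    ENNReal.ofReal (F₃ (1 + (‖x + y‖ + ‖x + z‖) / (1 + dist x y + dist x z)) /
        (dist x y + dist x z) ^ (2 * p)) ≤
      ENNReal.ofReal (4 ^ (2 * p)) * dyadicMajorant p F₃ J l c y z := by
  obtain ⟨k, hrk, hkr⟩ := exists_two_pow_mul_near hl hlr
  have hprofile := le_dyadicProfile hanti hx (hrk.trans (by gcongr))
  have hkernel : (4 * (dist x y + dist x z)) ^ (-(2 * p)) ≤
      (2 ^ k * l + dist c y) ^ (-p) * (2 ^ k * l + dist c z) ^ (-p) :=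
    rpow_neg_two_mul_le_mul (by positivity) (by positivity)
      (by linarith [dist_triangle_left c y x, dist_nonneg (x := x) (y := z)])
      (by linarith [dist_triangle_left c z x, dist_nonneg (x := x) (y := y)]) hp
  calc ENNReal.ofReal (F₃ (1 + (‖x + y‖ + ‖x + z‖) / (1 + dist x y + dist x z)) /
        (dist x y + dist x z) ^ (2 * p))
      = ENNReal.ofReal (4 ^ (2 * p) *
          (F₃ (1 + (‖x + y‖ + ‖x + z‖) / (1 + dist x y + dist x z)) *
            (4 * (dist x y + dist x z)) ^ (-(2 * p)))) := by
        rw [Real.rpow_neg (by positivity), Real.mul_rpow (by norm_num) (by positivity)]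
        congr 1
        field_simp
    _ ≤ ENNReal.ofReal (4 ^ (2 * p) * (dyadicProfile F₃ J k *
          ((2 ^ k * l + dist c y) ^ (-p) * (2 ^ k * l + dist c z) ^ (-p)))) := by
        have := dyadicProfile_nonneg (J := J) hF₃ k
        gcongr
    _ = ENNReal.ofReal (4 ^ (2 * p)) * (ENNReal.ofReal (dyadicProfile F₃ J k) *
          (decayKernel p (2 ^ k * l) c y * decayKernel p (2 ^ k * l) c z)) := by
        rw [ENNReal.ofReal_mul (by positivity), ENNReal.ofReal_mul (dyadicProfile_nonneg hF₃ k),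
          ENNReal.ofReal_mul (by positivity), decayKernel, decayKernel]
    _ ≤ ENNReal.ofReal (4 ^ (2 * p)) * dyadicMajorant p F₃ J l c y z := by
        gcongr
        exact ENNReal.le_tsum k

theorem exists_sq_lintegral_decayKernel_two_pow_mul_le (n : ℕ) {δ θ : ℝ} (hδ : 0 < δ)
    (hθδ : θ ≤ δ) :
    ∃ C : ℝ, 0 < C ∧ ∀ l : ℝ, 0 < l → ∀ (c : Rn n) (k : ℕ),
      (∫⁻ y, decayKernel (n + δ / 2) (2 ^ k * l) c y) ^ 2 ≤
        ENNReal.ofReal (C * l ^ (-δ) * (2 : ℝ) ^ (-(k : ℝ) * θ)) := by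
  obtain ⟨C, hC, hkernel⟩ := exists_lintegral_decayKernel_le (volume : Measure (Rn n))
    (p := n + δ / 2) (by simpa using hδ)
  refine ⟨C ^ 2, by positivity, fun l hl c k => ?_⟩
  have hk : (0 : ℝ) < 2 ^ k * l := by positivity
  calc (∫⁻ y, decayKernel (n + δ / 2) (2 ^ k * l) c y) ^ 2
      ≤ ENNReal.ofReal (C * (2 ^ k * l) ^ (-(δ / 2))) ^ 2 := by
        simpa using pow_le_pow_left' (hkernel _ hk c) 2
    _ = ENNReal.ofReal (C ^ 2 * (2 ^ k * l) ^ (-δ)) := by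
        rw [← ENNReal.ofReal_pow (by positivity), mul_pow, ← Real.rpow_mul_natCast hk.le]
        ring_nf
    _ ≤ ENNReal.ofReal (C ^ 2 * l ^ (-δ) * (2 : ℝ) ^ (-(k : ℝ) * θ)) := by
        rw [mul_assoc, mul_comm (l ^ (-δ))]
        gcongr
        exact two_pow_mul_rpow_neg_le hl hθδ k

theorem exists_lintegral_dyadicMajorant_le (n : ℕ) {δ θ : ℝ} (hδ : 0 < δ) (hθ : 0 < θ)
    (hθδ : θ ≤ δ) :
    ∃ C : ℝ, 0 < C ∧ ∀ F₃ : ℝ → ℝ, (∀ t, 0 ≤ F₃ t) → AntitoneOn F₃ (Ici 0) →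
      ∀ (J : Cube n) (l : ℝ), 0 < l → ∀ c : Rn n,
        ∫⁻ z, ∫⁻ y, dyadicMajorant (n + δ / 2) F₃ J l c y z ≤
          ENNReal.ofReal (C * l ^ (-δ) * Ft3 θ F₃ J) := by
  obtain ⟨C, hC, hmass⟩ := exists_sq_lintegral_decayKernel_two_pow_mul_le n hδ hθδ
  refine ⟨C, hC, fun F₃ hF₃ hanti J l hl c => ?_⟩
  have hprofile (k : ℕ) := dyadicProfile_nonneg (J := J) hF₃ k
  calc ∫⁻ z, ∫⁻ y, dyadicMajorant (n + δ / 2) F₃ J l c y z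
      = ∑' k : ℕ, ENNReal.ofReal (dyadicProfile F₃ J k) *
          (∫⁻ y, decayKernel (n + δ / 2) (2 ^ k * l) c y) ^ 2 := by
        simp only [dyadicMajorant, sq]
        exact lintegral_lintegral_tsum_mul _ (fun k => by fun_prop) (fun k => by fun_prop)
    _ ≤ ∑' k : ℕ, ENNReal.ofReal (C * l ^ (-δ) *
          ((2 : ℝ) ^ (-(k : ℝ) * θ) * dyadicProfile F₃ J k)) := by
        refine ENNReal.tsum_le_tsum fun k => ?_
        rw [← mul_assoc, mul_comm, ENNReal.ofReal_mul (by positivity)]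
        gcongr
        exact hmass l hl c k
    _ = ENNReal.ofReal (C * l ^ (-δ) * Ft3 θ F₃ J) := by
        rw [← ENNReal.ofReal_tsum_of_nonneg
          (fun k => mul_nonneg (by positivity) (mul_nonneg (by positivity) (hprofile k)))
          ((summable_dyadicProfile hθ hF₃ hanti).mul_left _), tsum_mul_left]
        rfl

end DyadicMajorant

theorem ofReal_integrand_le_dyadicMajorant {n : ℕ} [NeZero n] {δ : ℝ} (hδ : 0 < δ)
    {F₁ F₂ F₃ : ℝ → ℝ} (hF₁ : ∀ t, 0 ≤ F₁ t) (hF₂ : ∀ t, 0 ≤ F₂ t) (hF₃ : ∀ t, 0 ≤ F₃ t)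
    (hmono₁ : MonotoneOn F₁ (Ici 0)) (hanti₂ : AntitoneOn F₂ (Ici 0))
    (hanti₃ : AntitoneOn F₃ (Ici 0)) {J K : Cube n} {l : ℝ} (hKJ : K.toSet ⊆ J.toSet)
    (hKl : K.len ≤ l) (hl : l ≤ sDist K.toSet J.toSetᶜ) {x z : Rn n} (hx : x ∈ K.toSet)
    (y : Rn n) (hz : z ∈ J.toSetᶜ) :
    ENNReal.ofReal
        (F₁ (dist x K.center) * F₂ (dist x y + dist x z) *
          F₃ (1 + (‖x + y‖ + ‖x + z‖) / (1 + dist x y + dist x z)) *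
          K.len ^ δ / (dist x y + dist x z) ^ (2 * (n : ℝ) + δ)) ≤
      ENNReal.ofReal (4 ^ (2 * (n : ℝ) + δ) * F₁ K.len * F₂ K.len * K.len ^ δ) *
        dyadicMajorant (n + δ / 2) F₃ J l K.center y z := by
  have hK := K.len_pos
  have hlr : l ≤ dist x y + dist x z :=
    (hl.trans (sDist_le_dist hx hz)).trans (le_add_of_nonneg_left dist_nonneg)
  have hxc := K.dist_center_le hx
  have hlJ : l ≤ J.len := hl.trans (J.sDist_compl_toSet_le_len ⟨_, K.corner_mem_toSet⟩ hKJ)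
  have hbound₁ : F₁ (dist x K.center) ≤ F₁ K.len :=
    hmono₁ (mem_Ici.2 dist_nonneg) (mem_Ici.2 hK.le) (by linarith)
  have hbound₂ : F₂ (dist x y + dist x z) ≤ F₂ K.len :=
    hanti₂ (mem_Ici.2 hK.le) (mem_Ici.2 (by positivity)) (hKl.trans hlr)
  have hmajorant := ofReal_div_rpow_le_dyadicMajorant (p := n + δ / 2) (by positivity)
    (hK.trans_le hKl) hF₃ hanti₃ hlJ (hKJ hx) (by linarith : dist x K.center ≤ l) hlr
  rw [mul_add, mul_div_cancel₀ δ two_ne_zero] at hmajorant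
  have hF₁K := hF₁ K.len
  have hF₂K := hF₂ K.len
  set r := dist x y + dist x z
  set f := F₃ (1 + (‖x + y‖ + ‖x + z‖) / (1 + dist x y + dist x z))
  calc ENNReal.ofReal (F₁ (dist x K.center) * F₂ r * f * K.len ^ δ / r ^ (2 * (n : ℝ) + δ))
      ≤ ENNReal.ofReal (F₁ K.len * F₂ K.len * K.len ^ δ * (f / r ^ (2 * (n : ℝ) + δ))) := by
        have hf : 0 ≤ f := hF₃ _
        rw [mul_right_comm _ f, mul_div_assoc]
        gcongr
        exact hF₂ _
    _ ≤ ENNReal.ofReal (F₁ K.len * F₂ K.len * K.len ^ δ) * (ENNReal.ofReal (4 ^ (2 * (n : ℝ) + δ)) *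
          dyadicMajorant (n + δ / 2) F₃ J l K.center y z) := by
        rw [ENNReal.ofReal_mul (by positivity)]
        gcongr
    _ = ENNReal.ofReal (4 ^ (2 * (n : ℝ) + δ) * F₁ K.len * F₂ K.len * K.len ^ δ) *
          dyadicMajorant (n + δ / 2) F₃ J l K.center y z := by
        rw [← mul_assoc, ← ENNReal.ofReal_mul (by positivity)]
        ring_nf

theorem nested_integral_estimate_far_general
    (n : ℕ) (hn : 1 ≤ n) (δ θ : ℝ) (hδ0 : 0 < δ) (hθ0 : 0 < θ) (hθδ : θ ≤ δ) :
    ∃ C : ℝ, 0 < C ∧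
      ∀ F₁ F₂ F₃ : ℝ → ℝ,
        (∀ t, 0 ≤ F₁ t) → (∀ t, 0 ≤ F₂ t) → (∀ t, 0 ≤ F₃ t) →
        MonotoneOn F₁ (Set.Ici 0) → AntitoneOn F₂ (Set.Ici 0) → AntitoneOn F₃ (Set.Ici 0) →
        ∀ J K : Cube n, ∀ l : ℝ,
          K.toSet ⊆ J.toSet →
          K.len ≤ l → l ≤ sDist K.toSet (J.toSet)ᶜ →
          (∫⁻ z in (J.toSet)ᶜ, ∫⁻ y, ∫⁻ x in K.toSet,
              ENNReal.ofReal
                (F₁ (dist x K.center) * F₂ (dist x y + dist x z) *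
                  F₃ (1 + (‖x + y‖ + ‖x + z‖) / (1 + dist x y + dist x z)) *
                  K.len ^ δ / (dist x y + dist x z) ^ (2 * (n : ℝ) + δ))) ≤
            ENNReal.ofReal
              (C * F₁ K.len * F₂ K.len * Ft3 θ F₃ J * (volume K.toSet).toReal *
                (K.len / l) ^ δ) := by
  have : NeZero n := ⟨by lia⟩
  obtain ⟨C, hC, hmajorant⟩ := exists_lintegral_dyadicMajorant_le n hδ0 hθ0 hθδ
  refine ⟨4 ^ (2 * (n : ℝ) + δ) * C, by positivity, ?_⟩
  intro F₁ F₂ F₃ hF₁ hF₂ hF₃ hmono₁ hanti₂ hanti₃ J K l hKJ hKl hl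
  have hK := K.len_pos
  have hl0 : 0 < l := hK.trans_le hKl
  have hF₁K := hF₁ K.len
  have hF₂K := hF₂ K.len
  set A : ℝ := 4 ^ (2 * (n : ℝ) + δ) * F₁ K.len * F₂ K.len * K.len ^ δ with hA
  have hA0 : 0 ≤ A := by positivity
  calc _ ≤ ∫⁻ z in J.toSetᶜ, ∫⁻ y, ∫⁻ _ in K.toSet,
          ENNReal.ofReal A * dyadicMajorant (n + δ / 2) F₃ J l K.center y z :=
        setLIntegral_mono' J.measurableSet_toSet.compl fun z hz => lintegral_mono fun y =>
          setLIntegral_mono' K.measurableSet_toSet fun x hx =>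
            ofReal_integrand_le_dyadicMajorant hδ0 hF₁ hF₂ hF₃ hmono₁ hanti₂ hanti₃ hKJ hKl hl
              hx y hz
    _ ≤ ∫⁻ z, ∫⁻ y, ∫⁻ _ in K.toSet,
          ENNReal.ofReal A * dyadicMajorant (n + δ / 2) F₃ J l K.center y z :=
        setLIntegral_le_lintegral _ _
    _ = ENNReal.ofReal A * (∫⁻ z, ∫⁻ y, dyadicMajorant (n + δ / 2) F₃ J l K.center y z) *
          volume K.toSet := by
        simp_rw [setLIntegral_const, lintegral_mul_const' _ _ K.volume_toSet_ne_top,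
          lintegral_const_mul' _ _ ENNReal.ofReal_ne_top]
    _ ≤ ENNReal.ofReal A * ENNReal.ofReal (C * l ^ (-δ) * Ft3 θ F₃ J) * volume K.toSet := by
        gcongr
        exact hmajorant F₃ hF₃ hanti₃ J l hl0 K.center
    _ = _ := by
        rw [← ENNReal.ofReal_toReal K.volume_toSet_ne_top, ← ENNReal.ofReal_mul hA0,
          ← ENNReal.ofReal_mul' ENNReal.toReal_nonneg,
          ENNReal.toReal_ofReal ENNReal.toReal_nonneg, Real.div_rpow hK.le hl0.le,
          Real.rpow_neg hl0.le, hA]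
        ring_nf

/-- the nested-cubes integral estimate `ℛ²`, with `y` ranging over `(3K)ᶜ`. -/
theorem nested_integral_estimate_far
    (n : ℕ) (hn : 1 ≤ n) (δ θ : ℝ)
    (hδ0 : 0 < δ) (hδ1 : δ ≤ 1) (hθ0 : 0 < θ) (hθδ : θ ≤ δ) :
    ∃ C : ℝ, 0 < C ∧
      ∀ F₁ F₂ F₃ : ℝ → ℝ,
        (∀ t, 0 ≤ F₁ t) → (∀ t, 0 ≤ F₂ t) → (∀ t, 0 ≤ F₃ t) →
        BddAbove (Set.range F₁) → BddAbove (Set.range F₂) → BddAbove (Set.range F₃) →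
        MonotoneOn F₁ (Set.Ici 0) → AntitoneOn F₂ (Set.Ici 0) → AntitoneOn F₃ (Set.Ici 0) →
        ∀ J K : Cube n, ∀ l : ℝ,
          K.toSet ⊆ J.toSet →
          K.len ≤ l → l ≤ sDist K.toSet (J.toSet)ᶜ →
          (∫⁻ z in (J.toSet)ᶜ, ∫⁻ y in ((K.dilate 3 (by norm_num)).toSet)ᶜ, ∫⁻ x in K.toSet,
              ENNReal.ofReal
                (F₁ (dist x K.center) * F₂ (dist x y + dist x z) *
                  F₃ (1 + (‖x + y‖ + ‖x + z‖) / (1 + dist x y + dist x z)) *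
                  K.len ^ δ / (dist x y + dist x z) ^ (2 * (n : ℝ) + δ))) ≤
            ENNReal.ofReal
              (C * F₁ K.len * F₂ K.len * Ft3 θ F₃ J * (volume K.toSet).toReal *
                (K.len / l) ^ δ) := by
  obtain ⟨C, hC, hest⟩ := nested_integral_estimate_far_general n hn δ θ hδ0 hθ0 hθδ
  exact ⟨C, hC, fun F₁ F₂ F₃ h₁ h₂ h₃ _ _ _ hm₁ ha₂ ha₃ J K l hKJ hKl hl =>
    (lintegral_mono fun _ => setLIntegral_le_lintegral _ _).trans
      (hest F₁ F₂ F₃ h₁ h₂ h₃ hm₁ ha₂ ha₃ J K l hKJ hKl hl)⟩
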